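/- arXiv:0911.2785 — 2 statements merged into one kernel-verified Lean document; each statement's English description precedes it below -/
import Mathlib

section
/- Let P be a ground normal logic program over a set of atoms not containing the atoms p₁,…,p_k (k ≥ 1), and let B be a conjunction of literals (positive and negated atoms) over the atoms of P. Let st(r) be the set of k rules pⱼ ← B, ¬p₁,…,¬p_{j−1}, ¬p_{j+1},…,¬p_k for j = 1,…,k (the standard translation of the exclusive disjunctive rule p₁ ⊕ ⋯ ⊕ p_k ← B). Then the stable models of P ∪ st(r) are exactly: (i) the sets M ∪ {pⱼ} where M is a stable model of P satisfying B and 1 ≤ j ≤ k, and (ii) the stable models M of P not satisfying B. In particular, in every stable model in which B holds, exactly one of p₁,…,p_k is true. -/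
/-- A ground normal logic program rule: head atom, positive body atoms, negated body atoms. -/
structure Rule (α : Type*) where
  head : α
  pos : Set α
  neg : Set α

/-- A fact is a rule with empty body. -/
def Rule.fact {α : Type*} (a : α) : Rule α := ⟨a, ∅, ∅⟩

/-- `I` is closed under the Gelfond–Lifschitz reduct `P^M`: for every rule of `P` whose
negated body atoms are all outside `M`, if the positive body is contained in `I` then
so is the head. -/
def ClosedUnderReduct {α : Type*} (P : Set (Rule α)) (M I : Set α) : Prop :=
  ∀ r ∈ P, (∀ c ∈ r.neg, c ∉ M) → r.pos ⊆ I → r.head ∈ I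

/-- Least model of the reduct `P^M`: the least set of atoms closed under its rules. -/
def LeastReductModel {α : Type*} (P : Set (Rule α)) (M : Set α) : Set α :=
  ⋂₀ {I | ClosedUnderReduct P M I}

/-- `M` is a stable model of `P` if it equals the least model of the reduct `P^M`. -/
def IsStableModel {α : Type*} (P : Set (Rule α)) (M : Set α) : Prop :=
  M = LeastReductModel P M

/-!
The heads `pⱼ` of the translated rules do not occur in `P`, so by the splitting theorem of Lifschitz
and Turner the stable models of `P ∪ st(r)` are those of `st(r) ∪ X`, where `X` runs through the
stable models of `P`, added as facts. If `X` falsifies `B`, no translated rule is ever active and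
only `X` itself results. If `X` satisfies `B`, the rules reduce to `pⱼ ← ¬pᵢ (i ≠ j)`: some `pⱼ` has
to be true, and once it is, it blocks every rule but its own, so the stable models are the sets
`X ∪ {pⱼ}`.
-/

section Program

variable {α : Type*} {P Q : Set (Rule α)} {M M' I I' X : Set α} {a : α}

/-- The atoms that occur in a program, in a head or in a body; "fresh" means outside this set. -/
def programAtoms (P : Set (Rule α)) : Set α :=
  {a | ∃ r ∈ P, a = r.head ∨ a ∈ r.pos ∨ a ∈ r.neg}

theorem notMem_programAtoms_iff :
    a ∉ programAtoms P ↔ ∀ r ∈ P, r.head ≠ a ∧ a ∉ r.pos ∧ a ∉ r.neg := by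
  simp [programAtoms, eq_comm]

theorem Rule.head_mem_programAtoms {r : Rule α} (hr : r ∈ P) : r.head ∈ programAtoms P :=
  ⟨r, hr, Or.inl rfl⟩

theorem closedUnderReduct_union :
    ClosedUnderReduct (P ∪ Q) M I ↔ ClosedUnderReduct P M I ∧ ClosedUnderReduct Q M I :=
  ⟨fun h => ⟨fun r hr => h r (Or.inl hr), fun r hr => h r (Or.inr hr)⟩,
    fun h r hr => hr.elim (h.1 r) (h.2 r)⟩

theorem closedUnderReduct_image_fact : ClosedUnderReduct (Rule.fact '' X) M I ↔ X ⊆ I := by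
  simp [ClosedUnderReduct, Rule.fact, Set.subset_def]

theorem ClosedUnderReduct.congr (h : ClosedUnderReduct P M I)
    (hM : ∀ a ∈ programAtoms P, a ∈ M ↔ a ∈ M') (hI : ∀ a ∈ programAtoms P, a ∈ I ↔ a ∈ I') :
    ClosedUnderReduct P M' I' := by
  intro r hr hneg hpos
  refine (hI _ (Rule.head_mem_programAtoms hr)).1 (h r hr (fun c hc hcM => ?_) fun b hb => ?_)
  · exact hneg c hc ((hM c ⟨r, hr, Or.inr (Or.inr hc)⟩).1 hcM)
  · exact (hI b ⟨r, hr, Or.inr (Or.inl hb)⟩).2 (hpos hb)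

theorem isLeast_leastReductModel (P : Set (Rule α)) (M : Set α) :
    IsLeast {I | ClosedUnderReduct P M I} (LeastReductModel P M) :=
  ⟨fun r hr hneg hpos _ hI => hI r hr hneg (hpos.trans (Set.sInter_subset_of_mem hI)),
    fun _ hI => Set.sInter_subset_of_mem hI⟩

theorem isStableModel_iff_isLeast :
    IsStableModel P M ↔ IsLeast {I | ClosedUnderReduct P M I} M := by
  refine ⟨fun h => ?_, fun h => h.unique (isLeast_leastReductModel P M)⟩
  have hleast := isLeast_leastReductModel P M
  rwa [← h] at hleast

theorem IsStableModel.closedUnderReduct (h : IsStableModel P M) : ClosedUnderReduct P M M :=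
  (isStableModel_iff_isLeast.1 h).1

theorem IsStableModel.subset_of_closedUnderReduct (h : IsStableModel P M)
    (hI : ClosedUnderReduct P M I) : M ⊆ I :=
  (isStableModel_iff_isLeast.1 h).2 hI

theorem IsStableModel.subset_image_head (h : IsStableModel P M) : M ⊆ Rule.head '' P :=
  h.subset_of_closedUnderReduct fun _ hr _ _ => Set.mem_image_of_mem _ hr

theorem IsStableModel.subset_programAtoms (h : IsStableModel P M) : M ⊆ programAtoms P :=
  h.subset_image_head.trans (Set.image_subset_iff.2 fun _ hr => Rule.head_mem_programAtoms hr)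

theorem isStableModel_union_image_fact_iff :
    IsStableModel (Q ∪ Rule.fact '' X) M ↔
      (ClosedUnderReduct Q M M ∧ X ⊆ M) ∧ ∀ I, ClosedUnderReduct Q M I → X ⊆ I → M ⊆ I := by
  simp only [isStableModel_iff_isLeast, IsLeast, mem_lowerBounds, Set.mem_ofPred_eq,
    closedUnderReduct_union, closedUnderReduct_image_fact, and_imp]

theorem IsStableModel.subset_union_image_head (h : IsStableModel (Q ∪ Rule.fact '' X) M) :
    M ⊆ X ∪ Rule.head '' Q :=
  (isStableModel_union_image_fact_iff.1 h).2 _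
    (fun _ hr _ _ => Or.inr (Set.mem_image_of_mem _ hr)) Set.subset_union_left

end Program

section Splitting

variable {α : Type*} {P Q : Set (Rule α)} {M X : Set α}

theorem IsStableModel.inter_programAtoms (hQ : ∀ r ∈ Q, r.head ∉ programAtoms P)
    (h : IsStableModel (P ∪ Q) M) : IsStableModel P (M ∩ programAtoms P) := by
  have hagree : ∀ a ∈ programAtoms P, a ∈ M ↔ a ∈ M ∩ programAtoms P :=
    fun a ha => (and_iff_left ha).symm
  have hclosed := (closedUnderReduct_union.1 h.closedUnderReduct).1
  refine isStableModel_iff_isLeast.2 ⟨hclosed.congr hagree hagree, fun I hI => ?_⟩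
  have hIunion : ClosedUnderReduct (P ∪ Q) M (I ∪ (programAtoms P)ᶜ) :=
    closedUnderReduct_union.2
      ⟨hI.congr (fun a ha => (hagree a ha).symm) fun a ha => by simp [ha],
        fun r hr _ _ => Or.inr (hQ r hr)⟩
  exact fun a ha => (h.subset_of_closedUnderReduct hIunion ha.1).resolve_right (not_not_intro ha.2)

theorem IsStableModel.right_union_image_fact (h : IsStableModel (P ∪ Q) M) :
    IsStableModel (Q ∪ Rule.fact '' (M ∩ programAtoms P)) M := by
  obtain ⟨hP, hQ⟩ := closedUnderReduct_union.1 h.closedUnderReduct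
  refine isStableModel_union_image_fact_iff.2
    ⟨⟨hQ, Set.inter_subset_left⟩, fun I hI hXI => ?_⟩
  have hPinter : ClosedUnderReduct P M (M ∩ I) := fun r hr hneg hpos =>
    have hhead := hP r hr hneg (hpos.trans Set.inter_subset_left)
    ⟨hhead, hXI ⟨hhead, Rule.head_mem_programAtoms hr⟩⟩
  have hQinter : ClosedUnderReduct Q M (M ∩ I) := fun r hr hneg hpos =>
    ⟨hQ r hr hneg (hpos.trans Set.inter_subset_left),
      hI r hr hneg (hpos.trans Set.inter_subset_right)⟩
  exact (h.subset_of_closedUnderReduct (closedUnderReduct_union.2 ⟨hPinter, hQinter⟩)).trans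
    Set.inter_subset_right

theorem IsStableModel.union_of_right_union_image_fact (hQ : ∀ r ∈ Q, r.head ∉ programAtoms P)
    (hX : IsStableModel P X) (h : IsStableModel (Q ∪ Rule.fact '' X) M) :
    IsStableModel (P ∪ Q) M := by
  obtain ⟨⟨hMQ, hXM⟩, hmin⟩ := isStableModel_union_image_fact_iff.1 h
  have hagree : ∀ a ∈ programAtoms P, a ∈ X ↔ a ∈ M := by
    refine fun a ha => ⟨@hXM a, fun haM => (h.subset_union_image_head haM).resolve_right ?_⟩
    rintro ⟨r, hr, rfl⟩
    exact hQ r hr ha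
  refine isStableModel_iff_isLeast.2
    ⟨closedUnderReduct_union.2 ⟨hX.closedUnderReduct.congr hagree hagree, hMQ⟩, fun I hI => ?_⟩
  obtain ⟨hIP, hIQ⟩ := closedUnderReduct_union.1 hI
  exact hmin I hIQ (hX.subset_of_closedUnderReduct
    (hIP.congr (fun a ha => (hagree a ha).symm) fun _ _ => Iff.rfl))

theorem isStableModel_union_iff_exists_split (hQ : ∀ r ∈ Q, r.head ∉ programAtoms P) :
    IsStableModel (P ∪ Q) M ↔
      ∃ X, IsStableModel P X ∧ IsStableModel (Q ∪ Rule.fact '' X) M :=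
  ⟨fun h => ⟨_, h.inter_programAtoms hQ, h.right_union_image_fact⟩,
    fun ⟨_, hX, h⟩ => hX.union_of_right_union_image_fact hQ h⟩

end Splitting

section ExclusiveDisjunction

variable {α ι : Type*} {p : ι → α} {Bpos Bneg M I X : Set α}

/-- The standard translation of the exclusive disjunctive rule with head atoms `p j` and body
`Bpos, ¬Bneg`: for each `j` the rule `p j ← Bpos, ¬Bneg, ¬(p i)_{i ≠ j}`. The index type and the
body may be infinite. -/
def exclusiveTranslation (p : ι → α) (Bpos Bneg : Set α) : Set (Rule α) :=
  {r | ∃ j, r = ⟨p j, Bpos, Bneg ∪ {a | ∃ i, i ≠ j ∧ a = p i}⟩}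

theorem closedUnderReduct_exclusiveTranslation_iff :
    ClosedUnderReduct (exclusiveTranslation p Bpos Bneg) M I ↔
      ∀ j, (∀ a ∈ Bneg, a ∉ M) → (∀ i, i ≠ j → p i ∉ M) → Bpos ⊆ I → p j ∈ I := by
  constructor
  · rintro h j hneg hp hpos
    refine h _ ⟨j, rfl⟩ ?_ hpos
    rintro c (hc | ⟨i, hij, rfl⟩)
    exacts [hneg c hc, hp i hij]
  · rintro h _ ⟨j, rfl⟩ hneg hpos
    exact h j (fun a ha => hneg a (Or.inl ha)) (fun i hij => hneg _ (Or.inr ⟨i, hij, rfl⟩)) hpos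

theorem image_head_exclusiveTranslation :
    Rule.head '' exclusiveTranslation p Bpos Bneg = Set.range p := by
  ext a
  simp [exclusiveTranslation]

theorem isStableModel_exclusiveTranslation_union_image_fact_iff_of_not_body
    (hB : ¬(Bpos ⊆ X ∧ ∀ a ∈ Bneg, a ∉ X)) :
    IsStableModel (exclusiveTranslation p Bpos Bneg ∪ Rule.fact '' X) M ↔ M = X := by
  have hinactive : ∀ M, X ⊆ M → ClosedUnderReduct (exclusiveTranslation p Bpos Bneg) M X :=
    fun M hXM => closedUnderReduct_exclusiveTranslation_iff.2 fun _ hneg _ hpos =>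
      absurd ⟨hpos, fun a ha haX => hneg a ha (hXM haX)⟩ hB
  rw [isStableModel_union_image_fact_iff]
  constructor
  · rintro ⟨⟨-, hXM⟩, hmin⟩
    exact (hmin X (hinactive M hXM) subset_rfl).antisymm hXM
  · rintro rfl
    exact ⟨⟨hinactive M subset_rfl, subset_rfl⟩, fun _ _ hMI => hMI⟩

theorem IsStableModel.exists_eq_union_singleton [Nonempty ι] (hBneg : ∀ j, p j ∉ Bneg)
    (hpos : Bpos ⊆ X) (hneg : ∀ a ∈ Bneg, a ∉ X)
    (h : IsStableModel (exclusiveTranslation p Bpos Bneg ∪ Rule.fact '' X) M) :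
    ∃ j, M = X ∪ {p j} := by
  obtain ⟨⟨hclosed, hXM⟩, hmin⟩ := isStableModel_union_image_fact_iff.1 h
  have hnegM : ∀ a ∈ Bneg, a ∉ M := fun a ha haM => by
    have hcover := h.subset_union_image_head haM
    rw [image_head_exclusiveTranslation] at hcover
    obtain haX | ⟨j, rfl⟩ := hcover
    exacts [hneg a ha haX, hBneg j ha]
  obtain ⟨j, hj⟩ : ∃ j, p j ∈ M := by
    by_contra! hnone
    obtain ⟨j⟩ := ‹Nonempty ι›
    exact hnone j (closedUnderReduct_exclusiveTranslation_iff.1 hclosed j hnegM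
      (fun i _ => hnone i) (hpos.trans hXM))
  have hblocked : ClosedUnderReduct (exclusiveTranslation p Bpos Bneg) M (X ∪ {p j}) :=
    closedUnderReduct_exclusiveTranslation_iff.2 fun l _ hl _ => by
      have hjl : j = l := by_contra fun hne => hl j hne hj
      exact Or.inr (congrArg p hjl.symm)
  exact ⟨j, (hmin _ hblocked Set.subset_union_left).antisymm
    (Set.union_subset hXM (Set.singleton_subset_iff.2 hj))⟩

theorem isStableModel_exclusiveTranslation_union_image_fact (hinj : Function.Injective p)
    (hX : ∀ j, p j ∉ X) (hBneg : ∀ j, p j ∉ Bneg) (hpos : Bpos ⊆ X) (hneg : ∀ a ∈ Bneg, a ∉ X)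
    (j : ι) :
    IsStableModel (exclusiveTranslation p Bpos Bneg ∪ Rule.fact '' X) (X ∪ {p j}) := by
  have hnegM : ∀ a ∈ Bneg, a ∉ X ∪ {p j} := by
    rintro a ha (haX | rfl)
    exacts [hneg a ha haX, hBneg j ha]
  have honly : ∀ i, p i ∈ X ∪ {p j} → i = j := fun i hi => hinj (hi.resolve_left (hX i))
  refine isStableModel_union_image_fact_iff.2
    ⟨⟨closedUnderReduct_exclusiveTranslation_iff.2 fun l _ hl _ => ?_, Set.subset_union_left⟩,
      fun I hI hXI => ?_⟩
  · have hjl : j = l := by_contra fun hne => hl j hne (Or.inr rfl)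
    exact Or.inr (congrArg p hjl.symm)
  · exact Set.union_subset hXI (Set.singleton_subset_iff.2
      (closedUnderReduct_exclusiveTranslation_iff.1 hI j hnegM
        (fun i hij hi => hij (honly i hi)) (hpos.trans hXI)))

theorem isStableModel_exclusiveTranslation_union_image_fact_iff [Nonempty ι]
    (hinj : Function.Injective p) (hX : ∀ j, p j ∉ X) (hBneg : ∀ j, p j ∉ Bneg) :
    IsStableModel (exclusiveTranslation p Bpos Bneg ∪ Rule.fact '' X) M ↔
      (∃ j, Bpos ⊆ X ∧ (∀ a ∈ Bneg, a ∉ X) ∧ M = X ∪ {p j}) ∨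
        (M = X ∧ ¬(Bpos ⊆ X ∧ ∀ a ∈ Bneg, a ∉ X)) := by
  constructor
  · intro h
    by_cases hB : Bpos ⊆ X ∧ ∀ a ∈ Bneg, a ∉ X
    · obtain ⟨j, hj⟩ := h.exists_eq_union_singleton hBneg hB.1 hB.2
      exact Or.inl ⟨j, hB.1, hB.2, hj⟩
    · have hM := (isStableModel_exclusiveTranslation_union_image_fact_iff_of_not_body hB).1 h
      exact Or.inr ⟨hM, hB⟩
  · rintro (⟨j, hpos, hneg, rfl⟩ | ⟨hM, hB⟩)
    · exact isStableModel_exclusiveTranslation_union_image_fact hinj hX hBneg hpos hneg j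
    · exact (isStableModel_exclusiveTranslation_union_image_fact_iff_of_not_body hB).2 hM

theorem isStableModel_union_exclusiveTranslation_iff [Nonempty ι] {P : Set (Rule α)}
    (hinj : Function.Injective p) (hfresh : ∀ j, p j ∉ programAtoms P)
    (hBneg : ∀ j, p j ∉ Bneg) :
    IsStableModel (P ∪ exclusiveTranslation p Bpos Bneg) M ↔
      (∃ (X : Set α) (j : ι), IsStableModel P X ∧
          Bpos ⊆ X ∧ (∀ a ∈ Bneg, a ∉ X) ∧ M = X ∪ {p j}) ∨
        (IsStableModel P M ∧ ¬(Bpos ⊆ M ∧ ∀ a ∈ Bneg, a ∉ M)) := by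
  have hheads : ∀ r ∈ exclusiveTranslation p Bpos Bneg, r.head ∉ programAtoms P := by
    rintro _ ⟨j, rfl⟩
    exact hfresh j
  have htop {X : Set α} (hX : IsStableModel P X) :=
    isStableModel_exclusiveTranslation_union_image_fact_iff (Bpos := Bpos) (M := M) hinj
      (fun j hj => hfresh j (hX.subset_programAtoms hj)) hBneg
  rw [isStableModel_union_iff_exists_split hheads]
  constructor
  · rintro ⟨X, hX, hM⟩
    obtain ⟨j, hj⟩ | ⟨rfl, hB⟩ := (htop hX).1 hM
    exacts [Or.inl ⟨X, j, hX, hj⟩, Or.inr ⟨hX, hB⟩]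
  · rintro (⟨X, j, hX, hj⟩ | ⟨hM, hB⟩)
    exacts [⟨X, hX, (htop hX).2 (Or.inl ⟨j, hj⟩)⟩, ⟨M, hM, (htop hM).2 (Or.inr ⟨rfl, hB⟩)⟩]

end ExclusiveDisjunction

theorem stmt4_general {α ι : Type*} [Nonempty ι] (P : Set (Rule α)) (p : ι → α)
    (hinj : Function.Injective p) (hfresh : ∀ j, p j ∉ programAtoms P)
    (Bpos Bneg : Set α) (hBneg : ∀ j, p j ∉ Bneg) :
    (∀ M' : Set α, IsStableModel (P ∪ exclusiveTranslation p Bpos Bneg) M' ↔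
      ((∃ (M : Set α) (j : ι), IsStableModel P M ∧
          Bpos ⊆ M ∧ (∀ a ∈ Bneg, a ∉ M) ∧ M' = M ∪ {p j}) ∨
       (IsStableModel P M' ∧ ¬(Bpos ⊆ M' ∧ ∀ a ∈ Bneg, a ∉ M')))) ∧
    (∀ M' : Set α, IsStableModel (P ∪ exclusiveTranslation p Bpos Bneg) M' →
      Bpos ⊆ M' → (∀ a ∈ Bneg, a ∉ M') → ∃! j, p j ∈ M') := by
  refine ⟨fun M' => isStableModel_union_exclusiveTranslation_iff hinj hfresh hBneg,
    fun M' hM' hpos hneg => ?_⟩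
  obtain ⟨M, j, hM, -, -, rfl⟩ :=
    ((isStableModel_union_exclusiveTranslation_iff hinj hfresh hBneg).1 hM').resolve_right
      fun h => h.2 ⟨hpos, hneg⟩
  have hnotMem (i : ι) : p i ∉ M := fun hi => hfresh i (hM.subset_programAtoms hi)
  exact ⟨j, Or.inr rfl, fun i hi => hinj (hi.resolve_left (hnotMem i))⟩

theorem stmt4 {α : Type*} (P : Set (Rule α)) (k : ℕ) (hk : 1 ≤ k)
    (p : Fin k → α) (hinj : Function.Injective p)
    (hfresh : ∀ r ∈ P, ∀ j : Fin k, r.head ≠ p j ∧ p j ∉ r.pos ∧ p j ∉ r.neg)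
    (Bpos Bneg : Finset α)
    (hBpos : ∀ j : Fin k, p j ∉ Bpos) (hBneg : ∀ j : Fin k, p j ∉ Bneg)
    -- the standard translation `st(r)` of the exclusive disjunctive rule `p₁ ⊕ ⋯ ⊕ p_k ← B`
    (st : Set (Rule α))
    (hst : st = {r | ∃ j : Fin k,
        r = ⟨p j, ↑Bpos, ↑Bneg ∪ {a | ∃ i : Fin k, i ≠ j ∧ a = p i}⟩}) :
    (∀ M' : Set α, IsStableModel (P ∪ st) M' ↔
      ((∃ (M : Set α) (j : Fin k), IsStableModel P M ∧
          (↑Bpos : Set α) ⊆ M ∧ (∀ a ∈ Bneg, a ∉ M) ∧ M' = M ∪ {p j}) ∨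
       (IsStableModel P M' ∧ ¬((↑Bpos : Set α) ⊆ M' ∧ ∀ a ∈ Bneg, a ∉ M')))) ∧
    (∀ M' : Set α, IsStableModel (P ∪ st) M' →
      (↑Bpos : Set α) ⊆ M' → (∀ a ∈ Bneg, a ∉ M') → ∃! j : Fin k, p j ∈ M') := by
  have : Nonempty (Fin k) := Fin.pos_iff_nonempty.1 hk
  exact hst ▸ stmt4_general P p hinj
    (fun j => notMem_programAtoms_iff.2 fun r hr => hfresh r hr j) Bpos Bneg hBneg
end

section
/- Let X be a finite set and L a finite nonempty set, and consider the ground normal logic program P over the atoms {p(x,l) : x ∈ X, l ∈ L} ∪ {diff(x,l) : x ∈ X, l ∈ L} consisting, for all x ∈ X and l ∈ L, of the rules p(x,l) ← ¬diff(x,l) and, for all l' ∈ L with l' ≠ l, diff(x,l) ← p(x,l') (the standard translation of the generalized partition rule ⊕_L p(X,L)). Then the stable models of P are exactly the interpretations M_f = {p(x, f(x)) : x ∈ X} ∪ {diff(x,l) : x ∈ X, l ∈ L, l ≠ f(x)} for functions f : X → L. Hence the stable models of P are in bijection with the functions from X to L. -/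
/-- Atoms of the generalized partition program: `p(x,l)` and `diff(x,l)`. -/
inductive PAtom (X L : Type*) where
  | p : X → L → PAtom X L
  | diff : X → L → PAtom X L

/-- Standard translation of the generalized partition rule `⊕_L p(X,L)`:
`p(x,l) ← ¬diff(x,l)` and `diff(x,l) ← p(x,l')` for all `x`, `l`, and `l' ≠ l`. -/
def partitionProgram (X L : Type*) : Set (Rule (PAtom X L)) :=
  {r | ∃ (x : X) (l : L), r = ⟨PAtom.p x l, ∅, {PAtom.diff x l}⟩} ∪
  {r | ∃ (x : X) (l l' : L), l' ≠ l ∧ r = ⟨PAtom.diff x l, {PAtom.p x l'}, ∅⟩}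

/-!
The only positive dependencies of `P` lead from atoms `p(x,l')` to atoms `diff(x,l)`, so `P` is
tight and, by Fages' theorem, its stable models are the models of its Clark completion. For each
`x` the completion makes `diff(x,·)` the complement of `p(x,·)` and says that `p(x,l)` fails exactly
when some other `p(x,l')` holds; over a nonempty set of labels this means that `p(x,l)` holds for
exactly one `l`, so that the set of true atoms `p(x,l)` is the graph of a function.
-/

section StableModels

variable {α : Type*} {P : Set (Rule α)} {M I : Set α} {a : α}

/-- The immediate consequence operator of the reduct `P^M`: it sends `I` to the heads of the
rules of the reduct whose bodies hold in `I`. Its least fixed point is the least model of `P^M`. -/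
def reductConsequence (P : Set (Rule α)) (M : Set α) : Set α →o Set α where
  toFun I := {a | ∃ r ∈ P, r.head = a ∧ (∀ c ∈ r.neg, c ∉ M) ∧ r.pos ⊆ I}
  monotone' := fun _ _ hIJ _ ⟨r, hr, hhead, hneg, hpos⟩ => ⟨r, hr, hhead, hneg, hpos.trans hIJ⟩

theorem mem_reductConsequence :
    a ∈ reductConsequence P M I ↔
      ∃ r ∈ P, r.head = a ∧ (∀ c ∈ r.neg, c ∉ M) ∧ r.pos ⊆ I :=
  Iff.rfl

theorem closedUnderReduct_iff_reductConsequence_le :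
    ClosedUnderReduct P M I ↔ reductConsequence P M I ≤ I := by
  constructor
  · rintro hI _ ⟨r, hr, rfl, hneg, hpos⟩
    exact hI r hr hneg hpos
  · exact fun hI r hr hneg hpos => hI ⟨r, hr, rfl, hneg, hpos⟩

theorem leastReductModel_eq_lfp : LeastReductModel P M = (reductConsequence P M).lfp := by
  simp only [LeastReductModel, closedUnderReduct_iff_reductConsequence_le]
  rfl

/-- `M` is a model of Clark's completion of `P`: an atom is in `M` if and only if it is the head
of a rule of `P` whose body holds in `M`. -/
def IsCompletionModel (P : Set (Rule α)) (M : Set α) : Prop :=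
  Function.IsFixedPt (reductConsequence P M) M

theorem IsStableModel.isCompletionModel (hM : IsStableModel P M) : IsCompletionModel P M := by
  have hlfp : M = (reductConsequence P M).lfp := hM.trans leastReductModel_eq_lfp
  have hfix := (reductConsequence P M).isFixedPt_lfp
  rwa [← hlfp] at hfix

/-- A program is tight if its positive dependency relation, from body atoms to heads, is
well-founded. Negated body atoms are disregarded. -/
def IsTight (P : Set (Rule α)) : Prop :=
  WellFounded fun b a => ∃ r ∈ P, r.head = a ∧ b ∈ r.pos

theorem IsTight.subset_lfp_reductConsequence (hP : IsTight P)
    (hI : I ⊆ reductConsequence P M I) : I ⊆ (reductConsequence P M).lfp := by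
  intro a
  induction a using hP.induction with
  | _ a ih =>
    intro ha
    obtain ⟨r, hr, hhead, hneg, hpos⟩ := hI ha
    rw [← OrderHom.map_lfp]
    exact ⟨r, hr, hhead, hneg, fun b hb => ih b ⟨r, hr, hhead, hb⟩ (hpos hb)⟩

/-- Fages' theorem. -/
theorem IsTight.isStableModel_iff_isCompletionModel (hP : IsTight P) :
    IsStableModel P M ↔ IsCompletionModel P M := by
  refine ⟨IsStableModel.isCompletionModel, fun hM => ?_⟩
  rw [IsStableModel, leastReductModel_eq_lfp]
  exact (hP.subset_lfp_reductConsequence hM.ge).antisymm (OrderHom.lfp_le_fixed _ hM)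

end StableModels

theorem forall_exists_ne_iff_not_iff_existsUnique {α : Type*} [Nonempty α] {q : α → Prop} :
    (∀ a, (∃ b ≠ a, q b) ↔ ¬q a) ↔ ∃! a, q a := by
  constructor
  · intro hq
    obtain ⟨a, ha⟩ : ∃ a, q a := by
      by_contra! hnone
      obtain ⟨b, -, hb⟩ := (hq (Classical.arbitrary α)).2 (hnone _)
      exact hnone b hb
    refine ⟨a, ha, fun b hb => ?_⟩
    by_contra hne
    exact (hq a).1 ⟨b, hne, hb⟩ ha
  · rintro ⟨a, ha, hunique⟩ b
    constructor
    · rintro ⟨c, hcb, hc⟩ hb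
      exact hcb ((hunique c hc).trans (hunique b hb).symm)
    · exact fun hb => ⟨a, fun hab => hb (hab ▸ ha), ha⟩

section PartitionProgram

variable {X L : Type*} {M I : Set (PAtom X L)} {f : X → L} {x : X} {l : L}

theorem p_mem_reductConsequence_partitionProgram :
    PAtom.p x l ∈ reductConsequence (partitionProgram X L) M I ↔ PAtom.diff x l ∉ M := by
  simp [mem_reductConsequence, partitionProgram, or_and_right, exists_or]

theorem diff_mem_reductConsequence_partitionProgram :
    PAtom.diff x l ∈ reductConsequence (partitionProgram X L) M I ↔
      ∃ l' ≠ l, PAtom.p x l' ∈ I := by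
  simp [mem_reductConsequence, partitionProgram, or_and_right, exists_or]

theorem isTight_partitionProgram : IsTight (partitionProgram X L) := by
  let level : PAtom X L → ℕ
    | .p _ _ => 0
    | .diff _ _ => 1
  refine Subrelation.wf ?_ (measure level).wf
  rintro b _ ⟨r, ⟨x, l, rfl⟩ | ⟨x, l, l', -, rfl⟩, rfl, hb⟩
  · exact hb.elim
  · obtain rfl : b = PAtom.p x l' := hb
    exact Nat.zero_lt_one

theorem isCompletionModel_partitionProgram_iff :
    IsCompletionModel (partitionProgram X L) M ↔
      (∀ x l, (∃ l' ≠ l, PAtom.p x l' ∈ M) ↔ PAtom.p x l ∉ M) ∧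
        ∀ x l, PAtom.diff x l ∈ M ↔ PAtom.p x l ∉ M := by
  have hcompletion : IsCompletionModel (partitionProgram X L) M ↔
      (∀ x l, PAtom.diff x l ∉ M ↔ PAtom.p x l ∈ M) ∧
        ∀ x l, (∃ l' ≠ l, PAtom.p x l' ∈ M) ↔ PAtom.diff x l ∈ M := by
    simp only [IsCompletionModel, Function.IsFixedPt, Set.ext_iff,
      ← p_mem_reductConsequence_partitionProgram (I := M),
      ← diff_mem_reductConsequence_partitionProgram (M := M)]
    exact ⟨fun h => ⟨fun x l => h (.p x l), fun x l => h (.diff x l)⟩,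
      fun ⟨hp, hdiff⟩ a => a.casesOn hp hdiff⟩
  have hdiff : (∀ x l, PAtom.diff x l ∉ M ↔ PAtom.p x l ∈ M) ↔
      ∀ x l, PAtom.diff x l ∈ M ↔ PAtom.p x l ∉ M :=
    forall₂_congr fun _ _ => not_iff_comm.trans iff_comm
  rw [hcompletion, hdiff, and_comm]
  exact and_congr_left fun h => by simp only [h]

/-- The interpretation `M_f` determined by a function `f : X → L`. -/
def partitionModel (f : X → L) : Set (PAtom X L) :=
  {a | ∃ x : X, a = PAtom.p x (f x)} ∪
    {a | ∃ (x : X) (l : L), l ≠ f x ∧ a = PAtom.diff x l}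

theorem p_mem_partitionModel : PAtom.p x l ∈ partitionModel f ↔ f x = l := by
  simp [partitionModel, eq_comm]

theorem diff_mem_partitionModel : PAtom.diff x l ∈ partitionModel f ↔ f x ≠ l := by
  simp [partitionModel, eq_comm]

theorem eq_partitionModel_iff :
    M = partitionModel f ↔
      (∀ x l, PAtom.p x l ∈ M ↔ f x = l) ∧ ∀ x l, PAtom.diff x l ∈ M ↔ PAtom.p x l ∉ M := by
  constructor
  · rintro rfl
    simp only [p_mem_partitionModel, diff_mem_partitionModel, implies_true, ne_eq, and_self]
  · rintro ⟨hp, hdiff⟩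
    ext (⟨x, l⟩ | ⟨x, l⟩)
    · rw [hp, p_mem_partitionModel]
    · rw [hdiff, hp, diff_mem_partitionModel]

theorem partitionModel_injective :
    Function.Injective (partitionModel : (X → L) → Set (PAtom X L)) := by
  intro f g hfg
  funext x
  rw [← p_mem_partitionModel, hfg, p_mem_partitionModel]

theorem isStableModel_partitionProgram_iff [Nonempty L] :
    IsStableModel (partitionProgram X L) M ↔ ∃ f : X → L, M = partitionModel f := by
  calc IsStableModel (partitionProgram X L) M
    _ ↔ (∀ x l, (∃ l' ≠ l, PAtom.p x l' ∈ M) ↔ PAtom.p x l ∉ M) ∧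
          ∀ x l, PAtom.diff x l ∈ M ↔ PAtom.p x l ∉ M :=
      isTight_partitionProgram.isStableModel_iff_isCompletionModel.trans
        isCompletionModel_partitionProgram_iff
    _ ↔ (∀ x, ∃! l, PAtom.p x l ∈ M) ∧ ∀ x l, PAtom.diff x l ∈ M ↔ PAtom.p x l ∉ M := by
      simp only [forall_exists_ne_iff_not_iff_existsUnique]
    _ ↔ ∃ f : X → L, M = partitionModel f := by
      simp only [forall_existsUnique_iff, eq_partitionModel_iff, exists_and_right]

end PartitionProgram

theorem stmt5_general {X L : Type*} [Nonempty L] :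
    (∀ M : Set (PAtom X L), IsStableModel (partitionProgram X L) M ↔
      ∃ f : X → L, M = {a | ∃ x : X, a = PAtom.p x (f x)} ∪
        {a | ∃ (x : X) (l : L), l ≠ f x ∧ a = PAtom.diff x l}) ∧
    Nonempty ({M : Set (PAtom X L) // IsStableModel (partitionProgram X L) M} ≃ (X → L)) := by
  have hrange : ∀ M : Set (PAtom X L),
      IsStableModel (partitionProgram X L) M ↔ M ∈ Set.range partitionModel := fun M =>
    isStableModel_partitionProgram_iff.trans (exists_congr fun _ => eq_comm)
  exact ⟨fun _ => isStableModel_partitionProgram_iff,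
    ⟨(Equiv.subtypeEquivRight hrange).trans
      (Equiv.ofInjective partitionModel partitionModel_injective).symm⟩⟩

theorem stmt5 {X L : Type*} [Finite X] [Finite L] [Nonempty L] :
    (∀ M : Set (PAtom X L), IsStableModel (partitionProgram X L) M ↔
      ∃ f : X → L, M = {a | ∃ x : X, a = PAtom.p x (f x)} ∪
        {a | ∃ (x : X) (l : L), l ≠ f x ∧ a = PAtom.diff x l}) ∧
    Nonempty ({M : Set (PAtom X L) // IsStableModel (partitionProgram X L) M} ≃ (X → L)) :=
  stmt5_general
end
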